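/- arXiv:1102.1822 — 4 statements merged into one kernel-verified Lean document; each statement's English description precedes it below -/
import Mathlib

section
/- Let d ∈ ℂ with −1/2 < Re(d) < 0, let t ∈ ℝ and let x ∈ ℝ \ {0}. Then the function u ↦ (t−u)_+^d − (−u)_+^d is Lebesgue integrable on ℝ, and ∫_ℝ e^{iux} ((t−u)_+^d − (−u)_+^d) du = ((e^{itx} − 1)/(ix)) · |x|^{−d} · Γ(d+1) · e^{−sign(x)·iπd/2}. -/
open MeasureTheory

/-- `z₊^d := exp (d * log z)` for `z > 0`, and `0` otherwise. -/
noncomputable def posPow (z : ℝ) (d : ℂ) : ℂ :=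
  if 0 < z then Complex.exp (d * Real.log z) else 0

/-!
The Laplace transform `∫ s in (0, ∞), s ^ d * exp (-(r * s)) = r ^ (-(d + 1)) * Γ (d + 1)` is known
for `r > 0` and extends to `0 < re r` by analytic continuation. Translating it gives, for
`0 < re r`,
`∫ u, exp (r * u) * ((t - u)₊ ^ d - (-u)₊ ^ d) = (exp (r * t) - 1) * (r ^ (-(d + 1)) * Γ (d + 1))`.
The two terms on the left are not separately integrable at `re r = 0`, but their difference decays
like `|u| ^ (re d - 1)` at `-∞`. Hence both sides are continuous up to the punctured boundary
`re r = 0`, `r ≠ 0`, and the theorem is the boundary value at `r = i * x`.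
-/

open Complex Filter Set Topology

section Laplace

variable {d r : ℂ}

lemma norm_cpow_mul_exp_neg_mul {s : ℝ} (hs : 0 < s) :
    ‖(s : ℂ) ^ d * exp (-(r * s))‖ = s ^ d.re * Real.exp (-(r.re * s)) := by
  rw [norm_mul, norm_cpow_eq_rpow_re_of_pos hs, norm_exp, neg_re, re_mul_ofReal]

lemma integrableOn_rpow_mul_exp_neg_mul_Ioi {a b : ℝ} (ha : -1 < a) (hb : 0 < b) :
    IntegrableOn (fun s : ℝ => s ^ a * Real.exp (-(b * s))) (Ioi 0) := by
  simpa only [Real.rpow_one, neg_mul] using integrableOn_rpow_mul_exp_neg_mul_rpow ha one_pos hb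

lemma aestronglyMeasurable_cpow_mul_exp_neg_mul (d r : ℂ) (μ : Measure ℝ) :
    AEStronglyMeasurable (fun s : ℝ => (s : ℂ) ^ d * exp (-(r * s))) μ := by
  have : Measurable fun s : ℝ => (s : ℂ) ^ d := measurable_ofReal.pow_const d
  fun_prop

lemma integrableOn_cpow_mul_exp_neg_mul_Ioi (hd : -1 < d.re) (hr : 0 < r.re) :
    IntegrableOn (fun s : ℝ => (s : ℂ) ^ d * exp (-(r * s))) (Ioi 0) := by
  refine (integrableOn_rpow_mul_exp_neg_mul_Ioi hd hr).mono'
    (aestronglyMeasurable_cpow_mul_exp_neg_mul d r _) ?_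
  exact ae_restrict_of_forall_mem measurableSet_Ioi fun s hs => (norm_cpow_mul_exp_neg_mul hs).le

lemma differentiableAt_integral_cpow_mul_exp_neg_mul (hd : -1 < d.re) (hr : 0 < r.re) :
    DifferentiableAt ℂ (fun w : ℂ => ∫ s : ℝ in Ioi 0, (s : ℂ) ^ d * exp (-(w * s))) r := by
  have half_plane_mem : {w : ℂ | r.re / 2 < w.re} ∈ 𝓝 r :=
    (isOpen_lt continuous_const continuous_re).mem_nhds (half_lt_self hr)
  have hd' : -1 < (d + 1).re := by rw [add_re, one_re]; linarith
  have deriv_bound : ∀ s ∈ Ioi (0 : ℝ), ∀ w ∈ {w : ℂ | r.re / 2 < w.re},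
      ‖-((s : ℂ) ^ (d + 1) * exp (-(w * s)))‖ ≤
        s ^ (d + 1).re * Real.exp (-(r.re / 2 * s)) := by
    intro s (hs : 0 < s) w (hw : r.re / 2 < w.re)
    rw [norm_neg, norm_cpow_mul_exp_neg_mul hs]
    gcongr
  refine (hasDerivAt_integral_of_dominated_loc_of_deriv_le half_plane_mem
    (Eventually.of_forall fun w => aestronglyMeasurable_cpow_mul_exp_neg_mul d w _)
    (integrableOn_cpow_mul_exp_neg_mul_Ioi hd hr)
    (aestronglyMeasurable_cpow_mul_exp_neg_mul (d + 1) r _).neg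
    (ae_restrict_of_forall_mem measurableSet_Ioi deriv_bound)
    (integrableOn_rpow_mul_exp_neg_mul_Ioi hd' (half_pos hr))
    (ae_restrict_of_forall_mem measurableSet_Ioi fun s hs w _ => ?_)).2.differentiableAt
  have hs' : (s : ℂ) ≠ 0 := ofReal_ne_zero.mpr (ne_of_gt hs)
  refine ((hasDerivAt_mul_const (s : ℂ)).neg.cexp.const_mul ((s : ℂ) ^ d)).congr_deriv ?_
  rw [Pi.neg_apply, cpow_add _ _ hs', cpow_one]
  ring

lemma eqOn_re_pos_of_eq_ofReal {E : Type*} [NormedAddCommGroup E] [NormedSpace ℂ E]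
    [CompleteSpace E] {f g : ℂ → E} (hf : DifferentiableOn ℂ f {w | 0 < w.re})
    (hg : DifferentiableOn ℂ g {w | 0 < w.re}) (hfg : ∀ x : ℝ, 0 < x → f x = g x) :
    EqOn f g {w | 0 < w.re} := by
  have isOpen_re_pos : IsOpen {w : ℂ | 0 < w.re} := isOpen_lt continuous_const continuous_re
  have tendsto_ofReal : Tendsto ((↑) : ℝ → ℂ) (𝓝[>] 1) (𝓝[≠] 1) := by
    refine continuous_ofReal.continuousWithinAt.tendsto_nhdsWithin fun x (hx : 1 < x) => ?_
    exact ofReal_ne_one.mpr hx.ne'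
  have eq_near_one : ∃ᶠ w in 𝓝[≠] (1 : ℂ), f w = g w := by
    refine tendsto_ofReal.frequently (Eventually.frequently ?_)
    filter_upwards [self_mem_nhdsWithin] with x hx
    exact hfg x (one_pos.trans hx)
  exact (hf.analyticOnNhd isOpen_re_pos).eqOn_of_preconnected_of_frequently_eq
    (hg.analyticOnNhd isOpen_re_pos) (convex_halfSpace_re_gt 0).isPreconnected
    (by simp) eq_near_one

lemma integral_cpow_mul_exp_neg_mul_Ioi_of_re_pos (hd : -1 < d.re) (hr : 0 < r.re) :
    ∫ s : ℝ in Ioi 0, (s : ℂ) ^ d * exp (-(r * s)) = r ^ (-(d + 1)) * Gamma (d + 1) := by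
  refine eqOn_re_pos_of_eq_ofReal
    (f := fun w => ∫ s : ℝ in Ioi 0, (s : ℂ) ^ d * exp (-(w * s)))
    (g := fun w => w ^ (-(d + 1)) * Gamma (d + 1))
    (fun w hw =>
      (differentiableAt_integral_cpow_mul_exp_neg_mul hd hw).differentiableWithinAt)
    (fun w hw => ((differentiableAt_id.cpow_const (Or.inl hw)).mul_const _).differentiableWithinAt)
    (fun x hx => ?_) hr
  have hd' : 0 < (d + 1).re := by rw [add_re, one_re]; linarith
  have arg_ne_pi : arg (x : ℂ) ≠ Real.pi := by
    rw [arg_ofReal_of_nonneg hx.le]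
    exact Real.pi_ne_zero.symm
  simpa only [add_sub_cancel_right, one_div, inv_cpow _ _ arg_ne_pi, ← cpow_neg] using
    integral_cpow_mul_exp_neg_mul_Ioi hd' hx

end Laplace

section PosPow

variable {d r : ℂ}

lemma posPow_of_pos {z : ℝ} (hz : 0 < z) (d : ℂ) : posPow z d = (z : ℂ) ^ d := by
  rw [posPow, if_pos hz, cpow_def_of_ne_zero (ofReal_ne_zero.mpr hz.ne'), ofReal_log hz.le,
    mul_comm]

lemma posPow_of_nonpos {z : ℝ} (hz : z ≤ 0) (d : ℂ) : posPow z d = 0 :=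
  if_neg hz.not_gt

lemma posPow_eq_indicator (d : ℂ) :
    (fun z => posPow z d) = (Ioi 0).indicator fun z : ℝ => (z : ℂ) ^ d := by
  ext z
  by_cases hz : 0 < z
  · rw [posPow_of_pos hz, indicator_of_mem (mem_Ioi.mpr hz)]
  · rw [posPow_of_nonpos (not_lt.mp hz), indicator_of_notMem (notMem_Ioi.mpr (not_lt.mp hz))]

lemma posPow_mul_eq_indicator (d : ℂ) (g : ℝ → ℂ) :
    (fun z => posPow z d * g z) = (Ioi 0).indicator fun z : ℝ => (z : ℂ) ^ d * g z := by
  ext z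
  rw [indicator_mul_left, ← posPow_eq_indicator]

lemma measurable_posPow (d : ℂ) : Measurable fun z => posPow z d := by
  rw [posPow_eq_indicator]
  exact (measurable_ofReal.pow_const d).indicator measurableSet_Ioi

lemma integrable_posPow_mul_exp_neg_mul (hd : -1 < d.re) (hr : 0 < r.re) :
    Integrable fun s : ℝ => posPow s d * exp (-(r * s)) := by
  rw [posPow_mul_eq_indicator, integrable_indicator_iff measurableSet_Ioi]
  exact integrableOn_cpow_mul_exp_neg_mul_Ioi hd hr

lemma integral_posPow_mul_exp_neg_mul (hd : -1 < d.re) (hr : 0 < r.re) :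
    ∫ s : ℝ, posPow s d * exp (-(r * s)) = r ^ (-(d + 1)) * Gamma (d + 1) := by
  rw [posPow_mul_eq_indicator, integral_indicator measurableSet_Ioi,
    integral_cpow_mul_exp_neg_mul_Ioi_of_re_pos hd hr]

lemma exp_mul_posPow_sub (d r : ℂ) (t u : ℝ) :
    exp (r * u) * posPow (t - u) d =
      exp (r * t) * (posPow (t - u) d * exp (-(r * (t - u : ℝ)))) := by
  have exp_split : exp (r * u) = exp (r * t) * exp (-(r * (t - u : ℝ))) := by
    rw [← exp_add]
    push_cast
    ring_nf
  rw [exp_split]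
  ring

lemma integrable_exp_mul_posPow_sub (hd : -1 < d.re) (hr : 0 < r.re) (t : ℝ) :
    Integrable fun u : ℝ => exp (r * u) * posPow (t - u) d := by
  simp_rw [exp_mul_posPow_sub]
  exact ((integrable_posPow_mul_exp_neg_mul hd hr).comp_sub_left t).const_mul _

lemma integral_exp_mul_posPow_sub (hd : -1 < d.re) (hr : 0 < r.re) (t : ℝ) :
    ∫ u : ℝ, exp (r * u) * posPow (t - u) d =
      exp (r * t) * (r ^ (-(d + 1)) * Gamma (d + 1)) := by
  simp_rw [exp_mul_posPow_sub]
  rw [integral_const_mul,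
    integral_sub_left_eq_self (fun s : ℝ => posPow s d * exp (-(r * s))) volume t,
    integral_posPow_mul_exp_neg_mul hd hr]

end PosPow

section Increment

variable {d r : ℂ}

lemma norm_ofReal_cpow_sub_ofReal_cpow_le (hd : d.re ≤ 1) {c x y : ℝ} (hc : 0 < c) (hx : c ≤ x)
    (hy : c ≤ y) : ‖(y : ℂ) ^ d - (x : ℂ) ^ d‖ ≤ ‖d‖ * c ^ (d.re - 1) * |y - x| := by
  have hasDerivAt_cpow : ∀ z ∈ Ici c,
      HasDerivWithinAt (fun z : ℝ => (z : ℂ) ^ d) (d * (z : ℂ) ^ (d - 1)) (Ici c) z := by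
    intro z hz
    have hz' : (z : ℂ) ∈ slitPlane := ofReal_mem_slitPlane.mpr (hc.trans_le hz)
    simpa using ((hasDerivAt_id (z : ℂ)).cpow_const hz').comp_ofReal.hasDerivWithinAt
  have deriv_bound : ∀ z ∈ Ici c, ‖d * (z : ℂ) ^ (d - 1)‖ ≤ ‖d‖ * c ^ (d.re - 1) := by
    intro z hz
    rw [norm_mul, norm_cpow_eq_rpow_re_of_pos (hc.trans_le hz), sub_re, one_re]
    exact mul_le_mul_of_nonneg_left (Real.rpow_le_rpow_of_nonpos hc hz (by linarith))
      (norm_nonneg d)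
  exact (convex_Ici c).norm_image_sub_le_of_norm_hasDerivWithin_le hasDerivAt_cpow deriv_bound
    hx hy

lemma integrableOn_Iic_posPow_const_add (hd : -1 < d.re) (t A : ℝ) :
    IntegrableOn (fun s => posPow (t + s) d) (Iic A) := by
  have untranslated : IntegrableOn (fun s => posPow s d) (Iic (t + A)) := by
    rw [posPow_eq_indicator, IntegrableOn, integrable_indicator_iff measurableSet_Ioi,
      IntegrableOn, Measure.restrict_restrict measurableSet_Ioi, Ioi_inter_Iic]
    exact (intervalIntegral.intervalIntegrable_cpow' hd).1
  simpa [Function.comp_def] using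
    ((measurePreserving_add_left volume t).integrableOn_comp_preimage
      (measurableEmbedding_addLeft t)).mpr untranslated

lemma integrableOn_Ioi_posPow_const_add_sub (hd : d.re < 0) (t : ℝ) :
    IntegrableOn (fun s => posPow (t + s) d - posPow s d) (Ioi (2 * |t| + 1)) := by
  have decay : IntegrableOn (fun s : ℝ => (s / 2) ^ (d.re - 1)) (Ioi (2 * |t| + 1)) := by
    refine IntegrableOn.congr_fun
      (integrableOn_Ioi_rpow_of_lt (a := d.re - 1) (by linarith)
        (by positivity : 0 < 2 * |t| + 1) |>.div_const (2 ^ (d.re - 1)))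
      (fun s (hs : 2 * |t| + 1 < s) => ?_) measurableSet_Ioi
    exact (Real.div_rpow (by linarith [abs_nonneg t]) zero_le_two _).symm
  refine ((decay.const_mul ‖d‖).mul_const |t|).mono'
    (((measurable_posPow d).comp (measurable_const_add t)).sub
      (measurable_posPow d)).aestronglyMeasurable
    (ae_restrict_of_forall_mem measurableSet_Ioi fun s (hs : 2 * |t| + 1 < s) => ?_)
  have hs₀ : 0 < s := by linarith [abs_nonneg t]
  have hts : s / 2 ≤ t + s := by linarith [neg_abs_le t]
  rw [posPow_of_pos (by linarith), posPow_of_pos hs₀]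
  simpa only [add_sub_cancel_right] using
    norm_ofReal_cpow_sub_ofReal_cpow_le (by linarith) (half_pos hs₀) (half_le_self hs₀.le) hts

lemma integrable_posPow_sub_sub_posPow_neg (hd₁ : -1 < d.re) (hd₂ : d.re < 0) (t : ℝ) :
    Integrable fun u => posPow (t - u) d - posPow (-u) d := by
  have reflected : Integrable fun s => posPow (t + s) d - posPow s d := by
    rw [← integrableOn_univ, ← Iic_union_Ioi (a := 2 * |t| + 1), integrableOn_union]
    refine ⟨(integrableOn_Iic_posPow_const_add hd₁ t _).sub ?_,
      integrableOn_Ioi_posPow_const_add_sub hd₂ t⟩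
    simpa only [zero_add] using integrableOn_Iic_posPow_const_add hd₁ 0 (2 * |t| + 1)
  simpa only [sub_eq_add_neg] using reflected.comp_neg

end Increment

section BoundaryValue

lemma continuousOn_integral_exp_smul_of_eq_zero_on_Ioi {E : Type*} [NormedAddCommGroup E]
    [NormedSpace ℂ E] {f : ℝ → E} {T : ℝ} (hf : Integrable f) (hfT : ∀ u, T < u → f u = 0) :
    ContinuousOn (fun r : ℂ => ∫ u : ℝ, exp (r * u) • f u) {r | 0 ≤ r.re} := by
  intro r _
  have re_lt : ∀ᶠ w in 𝓝[{w : ℂ | 0 ≤ w.re}] r, w.re < r.re + 1 :=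
    nhdsWithin_le_nhds (continuous_re.continuousAt.eventually_lt_const (lt_add_one r.re))
  refine continuousWithinAt_of_dominated
    (bound := fun u => Real.exp ((r.re + 1) * |T|) * ‖f u‖)
    (Eventually.of_forall fun w => (by fun_prop : AEStronglyMeasurable fun u : ℝ =>
      exp (w * u)).smul hf.aestronglyMeasurable) ?_ (hf.norm.const_mul _)
    (Eventually.of_forall fun u => by fun_prop)
  filter_upwards [re_lt, self_mem_nhdsWithin] with w hw (hw₀ : 0 ≤ w.re)
  refine Eventually.of_forall fun u => ?_
  rcases le_or_gt u T with hu | hu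
  · have exponent_le : w.re * u ≤ (r.re + 1) * |T| :=
      calc w.re * u ≤ w.re * |T| := by gcongr; exact hu.trans (le_abs_self T)
        _ ≤ (r.re + 1) * |T| := by gcongr
    rw [norm_smul, norm_exp, re_mul_ofReal]
    gcongr
  · simp only [hfT u hu, smul_zero, norm_zero, mul_zero, le_refl]

variable {d r : ℂ}

lemma integral_exp_mul_posPow_sub_sub_posPow_neg_of_re_pos (hd : -1 < d.re) (hr : 0 < r.re)
    (t : ℝ) :
    ∫ u : ℝ, exp (r * u) * (posPow (t - u) d - posPow (-u) d) =
      (exp (r * t) - 1) * (r ^ (-(d + 1)) * Gamma (d + 1)) := by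
  have integrable_zero := integrable_exp_mul_posPow_sub hd hr 0
  have integral_zero := integral_exp_mul_posPow_sub hd hr 0
  simp only [zero_sub, ofReal_zero, mul_zero, exp_zero] at integrable_zero integral_zero
  simp_rw [mul_sub]
  rw [integral_sub (integrable_exp_mul_posPow_sub hd hr t) integrable_zero,
    integral_exp_mul_posPow_sub hd hr, integral_zero, ← sub_mul]

lemma integral_exp_mul_posPow_sub_sub_posPow_neg (hd₁ : -1 < d.re) (hd₂ : d.re < 0)
    (hr : 0 ≤ r.re) (hr₀ : r ≠ 0) (t : ℝ) :
    ∫ u : ℝ, exp (r * u) * (posPow (t - u) d - posPow (-u) d) =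
      (exp (r * t) - 1) * (r ^ (-(d + 1)) * Gamma (d + 1)) := by
  have vanish : ∀ u, |t| < u → posPow (t - u) d - posPow (-u) d = 0 := by
    intro u hu
    rw [posPow_of_nonpos (by linarith [le_abs_self t]),
      posPow_of_nonpos (by linarith [abs_nonneg t]), sub_zero]
  have continuousOn_left := continuousOn_integral_exp_smul_of_eq_zero_on_Ioi
    (integrable_posPow_sub_sub_posPow_neg hd₁ hd₂ t) vanish
  have continuousOn_right : ContinuousOn
      (fun w : ℂ => (exp (w * t) - 1) * (w ^ (-(d + 1)) * Gamma (d + 1)))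
      ({w | 0 ≤ w.re} \ {0}) := by
    have mem_slitPlane : ∀ w ∈ {w : ℂ | 0 ≤ w.re} \ {0}, w ∈ slitPlane := fun w hw =>
      mem_slitPlane_iff_not_le_zero.mpr fun hw' => hw.2 <|
        Complex.ext (le_antisymm hw'.1 hw.1) hw'.2
    exact ContinuousOn.mul (by fun_prop)
      ((continuousOn_id.cpow_const mem_slitPlane).mul continuousOn_const)
  refine EqOn.of_subset_closure (s := {w : ℂ | 0 < w.re})
    (fun w hw => integral_exp_mul_posPow_sub_sub_posPow_neg_of_re_pos hd₁ hw t)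
    (continuousOn_left.mono sdiff_subset) continuousOn_right ?_ ?_ ⟨hr, hr₀⟩
  · exact fun w (hw : 0 < w.re) => ⟨hw.le, fun hw₀ : w = 0 => by simp [hw₀] at hw⟩
  · rw [closure_setOfPred_lt_re]
    exact sdiff_subset

end BoundaryValue

lemma log_I_mul_ofReal {x : ℝ} (hx : x ≠ 0) :
    log (I * x) = Real.log |x| + Real.sign x * (Real.pi / 2) * I := by
  rcases hx.lt_or_gt with hx | hx
  · have factor : I * (x : ℂ) = (-x : ℝ) * -I := by push_cast; ring
    rw [factor, log_ofReal_mul (neg_pos.mpr hx) (neg_ne_zero.mpr I_ne_zero), log_neg_I,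
      Real.sign_of_neg hx, abs_of_neg hx]
    push_cast
    ring
  · rw [mul_comm, log_ofReal_mul hx I_ne_zero, log_I, Real.sign_of_pos hx, abs_of_pos hx,
      ofReal_one, one_mul]

lemma I_mul_ofReal_cpow_neg_add_one (d : ℂ) {x : ℝ} (hx : x ≠ 0) :
    (I * x) ^ (-(d + 1)) =
      exp (-d * Real.log |x|) * exp (-(Real.sign x : ℂ) * I * Real.pi * d / 2) / (I * x) := by
  have hIx : I * (x : ℂ) ≠ 0 := mul_ne_zero I_ne_zero (ofReal_ne_zero.mpr hx)
  rw [neg_add, ← sub_eq_add_neg, cpow_sub _ _ hIx, cpow_one, cpow_def_of_ne_zero hIx,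
    log_I_mul_ofReal hx, ← exp_add]
  ring_nf

theorem stmt0_general (d : ℂ) (hd₁ : -1 < d.re) (hd₂ : d.re < 0) (t : ℝ) (x : ℝ) (hx : x ≠ 0) :
    Integrable (fun u : ℝ => posPow (t - u) d - posPow (-u) d) ∧
    (∫ u : ℝ, Complex.exp (Complex.I * u * x) * (posPow (t - u) d - posPow (-u) d)) =
      ((Complex.exp (Complex.I * t * x) - 1) / (Complex.I * x)) *
        Complex.exp (-d * Real.log |x|) * Complex.Gamma (d + 1) *
        Complex.exp (-(Real.sign x : ℂ) * Complex.I * Real.pi * d / 2) := by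
  refine ⟨integrable_posPow_sub_sub_posPow_neg hd₁ hd₂ t, ?_⟩
  have re_nonneg : 0 ≤ (I * (x : ℂ)).re := by simp
  have hIx : I * (x : ℂ) ≠ 0 := mul_ne_zero I_ne_zero (ofReal_ne_zero.mpr hx)
  simp_rw [mul_right_comm I _ (x : ℂ)]
  rw [integral_exp_mul_posPow_sub_sub_posPow_neg hd₁ hd₂ re_nonneg hIx,
    I_mul_ofReal_cpow_neg_add_one d hx]
  ring

/-- For `d ∈ ℂ` with `-1/2 < Re d < 0`, `t ∈ ℝ` and `x ≠ 0`, the function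
`u ↦ (t-u)₊^d - (-u)₊^d` is Lebesgue integrable on `ℝ` and its Fourier-type integral
`∫ e^{iux} ((t-u)₊^d - (-u)₊^d) du` equals
`((e^{itx} - 1)/(ix)) ⬝ |x|^{-d} ⬝ Γ(d+1) ⬝ e^{-sign(x) iπd/2}`. -/
theorem stmt0 (d : ℂ) (hd1 : -(1/2 : ℝ) < d.re) (hd2 : d.re < 0) (t : ℝ) (x : ℝ) (hx : x ≠ 0) :
    Integrable (fun u : ℝ => posPow (t - u) d - posPow (-u) d) ∧
    (∫ u : ℝ, Complex.exp (Complex.I * u * x) * (posPow (t - u) d - posPow (-u) d)) =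
      ((Complex.exp (Complex.I * t * x) - 1) / (Complex.I * x)) *
        Complex.exp (-d * Real.log |x|) * Complex.Gamma (d + 1) *
        Complex.exp (-(Real.sign x : ℂ) * Complex.I * Real.pi * d / 2) :=
  stmt0_general d (by linarith) hd2 t x hx
end

section
/- Let t ∈ ℝ \ {0} and u ∈ ℝ \ {0, t}, and let C denote the Euler–Mascheroni constant. Then the improper integral lim_{T→∞} ∫_0^T e^{−iux} ((e^{itx} − 1)/(ix)) · log(x) dx exists and equals −i·log(|t−u|/|u|)·(C + (1/2)·log(|t−u|·|u|)) − (π/2)·((C + log|t−u|)·sign(t−u) − (C + log|u|)·sign(−u)). -/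
/-!
Let `F` be the entire function with `F 0 = 0` and `z F'(z) = f z - f 0`, and let `G` arise in the
same way from `F`. Integration by parts gives
`∫₀ᵀ (f (p x) - f (q x)) / x * log x dx = (F (pT) - F (qT)) log T - (G (pT) - G (qT))`.
Along the arc `s ↦ T exp (s α)` the derivatives of `F` and `G` are `α (f - f 0)` and `α F`, so for
`p = exp α` both primitives at `pT` are polynomials in `α` plus remainders controlled by the mean
of `|f|` over the arc. The divergent terms cancel as soon as `F T + f 0 * log T` has a limit.

For `f z = exp (-z)` this limit is `-γ`, because `∫₀^∞ exp (-x) log x dx = Γ'(1) = -γ`. Since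
`cos θ ≥ 1 - 2|θ|/π` for `|θ| ≤ π/2`, the mean of `|f|` over an arc is `O(1/T)` all the way up to
the imaginary axis, so `p` and `q` may be purely imaginary: take `p = -i(t - u)` and `q = iu`.
-/

open MeasureTheory Filter

open scoped Topology

section DslopePrimitive

lemma mul_dslope_zero (f : ℂ → ℂ) (z : ℂ) : z * dslope f 0 z = f z - f 0 := by
  simpa only [sub_zero, smul_eq_mul] using sub_smul_dslope f 0 z

lemma differentiable_dslope {f : ℂ → ℂ} (hf : Differentiable ℂ f) (a : ℂ) :
    Differentiable ℂ (dslope f a) :=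
  differentiableOn_univ.1 ((Complex.differentiableOn_dslope univ_mem).2 hf.differentiableOn)

/-- The entire function `F` with `F 0 = 0` and `z F'(z) = f z - f 0`, for `f` entire; for instance
`-Ein` when `f z = exp (-z)`. The value at `z` is the integral of `dslope f 0` over a horizontal
and then a vertical segment, which is the path along which Mathlib builds primitives. -/
noncomputable def dslopePrimitive (f : ℂ → ℂ) (z : ℂ) : ℂ :=
  Complex.wedgeIntegral 0 z (dslope f 0)

variable {f : ℂ → ℂ}

lemma dslopePrimitive_zero : dslopePrimitive f 0 = 0 := by
  simp [dslopePrimitive, Complex.wedgeIntegral]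

lemma hasDerivAt_dslopePrimitive (hf : Differentiable ℂ f) (z : ℂ) :
    HasDerivAt (dslopePrimitive f) (dslope f 0 z) z := by
  have hd := differentiable_dslope hf 0
  exact hd.differentiableOn.isConservativeOn.hasDerivAt_wedgeIntegral (r := ‖z‖ + 1)
    hd.continuous.continuousOn (by simp)

lemma differentiable_dslopePrimitive (hf : Differentiable ℂ f) :
    Differentiable ℂ (dslopePrimitive f) :=
  fun z => (hasDerivAt_dslopePrimitive hf z).differentiableAt

lemma hasDerivAt_dslopePrimitive_comp (hf : Differentiable ℂ f) {γ : ℝ → ℂ} {c : ℂ} {x : ℝ}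
    (hγ : HasDerivAt γ (c * γ x) x) :
    HasDerivAt (fun y => dslopePrimitive f (γ y)) (c * (f (γ x) - f 0)) x := by
  refine ((hasDerivAt_dslopePrimitive hf (γ x)).comp x hγ).congr_deriv ?_
  linear_combination c * mul_dslope_zero f (γ x)

end DslopePrimitive

section LogIntegrals

variable {f g : ℂ → ℂ} {T : ℝ}

lemma hasDerivAt_mul_ofReal (p : ℂ) (x : ℝ) : HasDerivAt (fun y : ℝ => p * (y : ℂ)) p x := by
  simpa using (hasDerivAt_id (x : ℂ)).comp_ofReal.const_mul p

lemma intervalIntegrable_mul_ofReal_log {h : ℝ → ℂ} (hh : Continuous h) (a b : ℝ) :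
    IntervalIntegrable (fun x : ℝ => h x * (Real.log x : ℂ)) volume a b :=
  IntervalIntegrable.continuousOn_mul
    ⟨intervalIntegral.intervalIntegrable_log'.1.ofReal,
      intervalIntegral.intervalIntegrable_log'.2.ofReal⟩ hh.continuousOn

lemma continuous_sub_mul_ofReal_log (hg : Differentiable ℂ g) (p : ℂ) :
    Continuous fun x : ℝ => (g (p * x) - g 0) * (Real.log x : ℂ) := by
  have hd := (differentiable_dslope hg 0).continuous
  have := Real.continuous_mul_log
  have hcont : Continuous fun x : ℝ => p * dslope g 0 (p * x) * ((x * Real.log x : ℝ) : ℂ) := by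
    fun_prop
  refine hcont.congr fun x => ?_
  push_cast
  linear_combination (Real.log x : ℂ) * mul_dslope_zero g (p * x)

lemma integral_deriv_mul_log (hg : Differentiable ℂ g) (p : ℂ) (hT : 0 ≤ T) :
    ∫ x in (0 : ℝ)..T, p * deriv g (p * x) * (Real.log x : ℂ) =
      (g (p * T) - g 0) * Real.log T - dslopePrimitive g (p * T) := by
  have hP := (differentiable_dslopePrimitive hg).continuous
  have hg' := hg.deriv.continuous
  have key := intervalIntegral.integral_eq_sub_of_hasDerivAt_of_le hT
    (f := fun x : ℝ => (g (p * x) - g 0) * (Real.log x : ℂ) - dslopePrimitive g (p * x))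
    (f' := fun x : ℝ => p * deriv g (p * x) * (Real.log x : ℂ))
    ((continuous_sub_mul_ofReal_log hg p).sub (by fun_prop)).continuousOn
    (fun x hx => ?_) (intervalIntegrable_mul_ofReal_log (by fun_prop) 0 T)
  · simpa [dslopePrimitive_zero] using key
  have hx0 : (x : ℂ) ≠ 0 := by exact_mod_cast hx.1.ne'
  have hray := hasDerivAt_mul_ofReal p x
  have hgray : HasDerivAt (fun y : ℝ => g (p * y) - g 0) (deriv g (p * x) * p) x :=
    ((hg (p * x)).hasDerivAt.comp x hray).sub_const _
  have hlog := (Real.hasDerivAt_log hx.1.ne').ofReal_comp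
  have hprim : HasDerivAt (fun y : ℝ => dslopePrimitive g (p * y))
      ((x : ℂ)⁻¹ * (g (p * x) - g 0)) x :=
    hasDerivAt_dslopePrimitive_comp hg (hray.congr_deriv (by field_simp))
  refine ((hgray.mul hlog).sub hprim).congr_deriv ?_
  push_cast
  ring

lemma integral_sub_div_mul_log (hf : Differentiable ℂ f) (p q : ℂ) (hT : 0 ≤ T) :
    ∫ x in (0 : ℝ)..T, (f (p * x) - f (q * x)) / x * (Real.log x : ℂ) =
      (dslopePrimitive f (p * T) - dslopePrimitive f (q * T)) * Real.log T -
        (dslopePrimitive (dslopePrimitive f) (p * T) -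
          dslopePrimitive (dslopePrimitive f) (q * T)) := by
  have hP := differentiable_dslopePrimitive hf
  have hP' := hP.deriv.continuous
  have hderiv (r : ℂ) {x : ℝ} (hx : (x : ℂ) ≠ 0) :
      r * deriv (dslopePrimitive f) (r * x) = (f (r * x) - f 0) / x := by
    rw [(hasDerivAt_dslopePrimitive hf _).deriv, eq_div_iff hx]
    linear_combination mul_dslope_zero f (r * x)
  calc ∫ x in (0 : ℝ)..T, (f (p * x) - f (q * x)) / x * (Real.log x : ℂ)
      = ∫ x in (0 : ℝ)..T, (p * deriv (dslopePrimitive f) (p * x) * (Real.log x : ℂ) -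
          q * deriv (dslopePrimitive f) (q * x) * (Real.log x : ℂ)) := by
        refine intervalIntegral.integral_congr_ae (Eventually.of_forall fun x hx => ?_)
        rw [Set.uIoc_of_le hT] at hx
        have hx0 : (x : ℂ) ≠ 0 := by exact_mod_cast hx.1.ne'
        rw [hderiv p hx0, hderiv q hx0]
        ring
    _ = _ := by
        rw [intervalIntegral.integral_sub
            (intervalIntegrable_mul_ofReal_log (by fun_prop) 0 T)
            (intervalIntegrable_mul_ofReal_log (by fun_prop) 0 T),
          integral_deriv_mul_log hP p hT, integral_deriv_mul_log hP q hT, dslopePrimitive_zero]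
        ring

end LogIntegrals

section Arcs

/-- The integral of `‖f‖` over the logarithmic arc `T * exp (r * α)`, `0 ≤ r ≤ 1`, from `T` to
`T * exp α`, parametrised by `r`; its decay in `T` controls all remainders. -/
noncomputable def arcNormIntegral (f : ℂ → ℂ) (α : ℂ) (T : ℝ) : ℝ :=
  ∫ r in (0 : ℝ)..1, ‖f (T * Complex.exp (r * α))‖

variable {f : ℂ → ℂ} {c α β : ℂ} {s T : ℝ}

lemma dslopePrimitive_mul_exp (hf : Differentiable ℂ f) (z α : ℂ) (s : ℝ) :
    dslopePrimitive f (z * Complex.exp (s * α)) =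
      dslopePrimitive f z + α * ∫ r in (0 : ℝ)..s, (f (z * Complex.exp (r * α)) - f 0) := by
  have harc (r : ℝ) : HasDerivAt (fun r : ℝ => z * Complex.exp (r * α))
      (α * (z * Complex.exp (r * α))) r := by
    refine ((((hasDerivAt_mul_ofReal α r).cexp).const_mul z).congr_deriv ?_).congr_of_eventuallyEq
      (Eventually.of_forall fun y => ?_)
    · rw [mul_comm α]; ring
    · simp only [mul_comm]
  have key := intervalIntegral.integral_eq_sub_of_hasDerivAt (a := 0) (b := s)
    (fun r _ => hasDerivAt_dslopePrimitive_comp hf (harc r))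
    (Continuous.intervalIntegrable (by have := hf.continuous; fun_prop) _ _)
  rw [intervalIntegral.integral_const_mul] at key
  simp only [Complex.ofReal_zero, zero_mul, Complex.exp_zero, mul_one] at key
  linear_combination -key

lemma norm_dslopePrimitive_mul_exp_sub_le (hf : Differentiable ℂ f) (α : ℂ) (T : ℝ)
    (hs : s ∈ Set.Icc (0 : ℝ) 1) :
    ‖dslopePrimitive f (T * Complex.exp (s * α)) - (dslopePrimitive f T - s * α * f 0)‖ ≤
      ‖α‖ * arcNormIntegral f α T := by
  have hcont : Continuous fun r : ℝ => f (T * Complex.exp (r * α)) := by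
    have := hf.continuous
    fun_prop
  have hrem : dslopePrimitive f (T * Complex.exp (s * α)) - (dslopePrimitive f T - s * α * f 0) =
      α * ∫ r in (0 : ℝ)..s, f (T * Complex.exp (r * α)) := by
    rw [dslopePrimitive_mul_exp hf, intervalIntegral.integral_sub
      (hcont.intervalIntegrable _ _) intervalIntegrable_const, intervalIntegral.integral_const,
      sub_zero, Complex.real_smul]
    ring
  rw [hrem, norm_mul, arcNormIntegral]
  gcongr
  exact (intervalIntegral.norm_integral_le_integral_norm hs.1).trans <|
    intervalIntegral.integral_mono_interval le_rfl hs.1 hs.2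
      (Eventually.of_forall fun r => norm_nonneg _) (hcont.norm.intervalIntegrable _ _)

lemma norm_dslopePrimitive_dslopePrimitive_mul_exp_sub_le (hf : Differentiable ℂ f) (α : ℂ)
    (T : ℝ) :
    ‖dslopePrimitive (dslopePrimitive f) (T * Complex.exp α) -
        (dslopePrimitive (dslopePrimitive f) T + α * dslopePrimitive f T - α ^ 2 / 2 * f 0)‖ ≤
      ‖α‖ * (‖α‖ * arcNormIntegral f α T) := by
  have hP := differentiable_dslopePrimitive hf
  have hcont : Continuous fun s : ℝ => dslopePrimitive f (T * Complex.exp (s * α)) := by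
    have := hP.continuous
    fun_prop
  have hlin : ∫ s in (0 : ℝ)..1, (dslopePrimitive f T - s * α * f 0) =
      dslopePrimitive f T - α / 2 * f 0 := by
    have hid : ∫ s in (0 : ℝ)..1, (s : ℂ) = 1 / 2 := by
      rw [intervalIntegral.integral_ofReal, integral_id]
      norm_num
    rw [intervalIntegral.integral_sub intervalIntegrable_const
      (Continuous.intervalIntegrable (by fun_prop) _ _)]
    simp only [mul_assoc, intervalIntegral.integral_mul_const, hid,
      intervalIntegral.integral_const, sub_zero, one_smul]
    ring
  have hrem : dslopePrimitive (dslopePrimitive f) (T * Complex.exp α) -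
        (dslopePrimitive (dslopePrimitive f) T + α * dslopePrimitive f T - α ^ 2 / 2 * f 0) =
      α * ∫ s in (0 : ℝ)..1, (dslopePrimitive f (T * Complex.exp (s * α)) -
        (dslopePrimitive f T - s * α * f 0)) := by
    have harc := dslopePrimitive_mul_exp hP T α 1
    simp only [dslopePrimitive_zero, sub_zero, Complex.ofReal_one, one_mul] at harc
    rw [harc, intervalIntegral.integral_sub (hcont.intervalIntegrable _ _)
      (Continuous.intervalIntegrable (by fun_prop) _ _), hlin]
    ring
  rw [hrem, norm_mul]
  gcongr
  refine (intervalIntegral.norm_integral_le_of_norm_le_const fun s hs => ?_).trans_eq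
    (by rw [sub_zero, abs_one, mul_one])
  rw [Set.uIoc_of_le zero_le_one] at hs
  exact norm_dslopePrimitive_mul_exp_sub_le hf α T ⟨hs.1.le, hs.2⟩

lemma arcNormIntegral_nonneg : 0 ≤ arcNormIntegral f α T :=
  intervalIntegral.integral_nonneg zero_le_one fun _ _ => norm_nonneg _

-- Expanding both primitives along the arc, the divergent terms combine into
-- `-α * (dslopePrimitive f T + f 0 * log T)`.
lemma tendsto_dslopePrimitive_mul_log_sub (hf : Differentiable ℂ f)
    (hc : Tendsto (fun T : ℝ => dslopePrimitive f T + f 0 * Real.log T) atTop (𝓝 c))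
    (hα : Tendsto (fun T : ℝ => Real.log T * arcNormIntegral f α T) atTop (𝓝 0)) :
    Tendsto (fun T : ℝ =>
      (dslopePrimitive f (Complex.exp α * T) - dslopePrimitive f T) * Real.log T -
        (dslopePrimitive (dslopePrimitive f) (Complex.exp α * T) -
          dslopePrimitive (dslopePrimitive f) T))
      atTop (𝓝 (α ^ 2 / 2 * f 0 - α * c)) := by
  have hmain : Tendsto (fun T : ℝ =>
      α ^ 2 / 2 * f 0 - α * (dslopePrimitive f T + f 0 * Real.log T))
      atTop (𝓝 (α ^ 2 / 2 * f 0 - α * c)) := (hc.const_mul α).const_sub _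
  have hbound := hα.const_mul (‖α‖ + ‖α‖ ^ 2)
  rw [mul_zero] at hbound
  refine (tendsto_iff_of_dist ?_).1 hmain
  refine squeeze_zero' (Eventually.of_forall fun _ => dist_nonneg) ?_ hbound
  filter_upwards [Real.tendsto_log_atTop.eventually_ge_atTop 1] with T hT
  have hfirst := norm_dslopePrimitive_mul_exp_sub_le hf α T (Set.right_mem_Icc.2 zero_le_one)
  have hsecond := norm_dslopePrimitive_dslopePrimitive_mul_exp_sub_le hf α T
  rw [Complex.ofReal_one, one_mul] at hfirst
  set a := dslopePrimitive f (T * Complex.exp α) - (dslopePrimitive f T - α * f 0) with ha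
  set b := dslopePrimitive (dslopePrimitive f) (T * Complex.exp α) -
    (dslopePrimitive (dslopePrimitive f) T + α * dslopePrimitive f T - α ^ 2 / 2 * f 0) with hb
  calc _ = ‖b - Real.log T * a‖ := by
        rw [dist_eq_norm, mul_comm (Complex.exp α), ha, hb]
        congr 1
        ring
    _ ≤ ‖b‖ + Real.log T * ‖a‖ := by
        refine (norm_sub_le _ _).trans_eq ?_
        rw [norm_mul, Complex.norm_real, Real.norm_of_nonneg (zero_le_one.trans hT)]
    _ ≤ Real.log T * (‖α‖ * (‖α‖ * arcNormIntegral f α T)) +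
        Real.log T * (‖α‖ * arcNormIntegral f α T) := by
        have hnonneg : 0 ≤ ‖α‖ * (‖α‖ * arcNormIntegral f α T) := (norm_nonneg b).trans hsecond
        gcongr
        exact hsecond.trans (le_mul_of_one_le_left hnonneg hT)
    _ = _ := by ring

theorem tendsto_integral_sub_div_mul_log (hf : Differentiable ℂ f)
    (hc : Tendsto (fun T : ℝ => dslopePrimitive f T + f 0 * Real.log T) atTop (𝓝 c))
    (hα : Tendsto (fun T : ℝ => Real.log T * arcNormIntegral f α T) atTop (𝓝 0))
    (hβ : Tendsto (fun T : ℝ => Real.log T * arcNormIntegral f β T) atTop (𝓝 0)) :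
    Tendsto (fun T : ℝ => ∫ x in (0 : ℝ)..T,
        (f (Complex.exp α * x) - f (Complex.exp β * x)) / x * (Real.log x : ℂ))
      atTop (𝓝 ((α ^ 2 - β ^ 2) / 2 * f 0 - (α - β) * c)) := by
  have hlim := (tendsto_dslopePrimitive_mul_log_sub hf hc hα).sub
    (tendsto_dslopePrimitive_mul_log_sub hf hc hβ)
  refine (hlim.congr' ?_).trans_eq ?_
  · filter_upwards [eventually_ge_atTop 0] with T hT
    rw [integral_sub_div_mul_log hf _ _ hT]
    ring
  · congr 1
    ring

end Arcs

section Exponential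

variable {α p q : ℂ} {s T : ℝ}

lemma exp_neg_abs_re_mul_one_sub_le_re_exp (hα : |α.im| ≤ Real.pi / 2)
    (hs : s ∈ Set.Icc (0 : ℝ) 1) :
    Real.exp (-|α.re|) * (1 - s) ≤ (Complex.exp (s * α)).re := by
  obtain ⟨hs0, hs1⟩ := hs
  rw [Complex.exp_re, Complex.re_ofReal_mul, Complex.im_ofReal_mul]
  have hmodulus : -|α.re| ≤ s * α.re := by
    refine neg_le_of_neg_le ((neg_le_abs _).trans ?_)
    rw [abs_mul, abs_of_nonneg hs0]
    exact mul_le_of_le_one_left (abs_nonneg _) hs1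
  have hangle : s * |α.im| ≤ s * (Real.pi / 2) := by gcongr
  have hcos : 1 - s ≤ Real.cos (s * α.im) :=
    calc 1 - s = 1 - 2 / Real.pi * (s * (Real.pi / 2)) := by field_simp
      _ ≤ 1 - 2 / Real.pi * (s * |α.im|) := by gcongr
      _ ≤ Real.cos (s * |α.im|) := Real.one_sub_mul_le_cos (by positivity)
          (hangle.trans (mul_le_of_le_one_left (by positivity) hs1))
      _ = Real.cos (s * α.im) := by rw [← Real.cos_abs (s * α.im), abs_mul, abs_of_nonneg hs0]
  have : 0 ≤ 1 - s := sub_nonneg.2 hs1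
  gcongr

lemma integral_exp_neg_mul_one_sub_le {k : ℝ} (hk : 0 < k) :
    ∫ s in (0 : ℝ)..1, Real.exp (-(k * (1 - s))) ≤ 1 / k := by
  have hrw (s : ℝ) : -(k * (1 - s)) = k * s - k := by ring
  simp only [hrw, intervalIntegral.integral_comp_mul_sub (fun x => Real.exp x) hk.ne',
    integral_exp, mul_zero, mul_one, sub_self, Real.exp_zero, smul_eq_mul, zero_sub,
    one_div]
  exact mul_le_of_le_one_right (by positivity) (by linarith [Real.exp_pos (-k)])

lemma arcNormIntegral_exp_neg_le (hα : |α.im| ≤ Real.pi / 2) (hT : 0 < T) :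
    arcNormIntegral (fun z => Complex.exp (-z)) α T ≤ 1 / (Real.exp (-|α.re|) * T) := by
  refine (intervalIntegral.integral_mono_on zero_le_one
    (Continuous.intervalIntegrable (by fun_prop) _ _)
    (Continuous.intervalIntegrable (by fun_prop) _ _) fun s hs => ?_).trans
    (integral_exp_neg_mul_one_sub_le (k := Real.exp (-|α.re|) * T) (by positivity))
  rw [Complex.norm_exp, Complex.neg_re, Complex.re_ofReal_mul, Real.exp_le_exp, neg_le_neg_iff]
  calc Real.exp (-|α.re|) * T * (1 - s) = T * (Real.exp (-|α.re|) * (1 - s)) := by ring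
    _ ≤ T * (Complex.exp (s * α)).re := by
        gcongr
        exact exp_neg_abs_re_mul_one_sub_le_re_exp hα hs

lemma tendsto_log_mul_arcNormIntegral_exp_neg (hα : |α.im| ≤ Real.pi / 2) :
    Tendsto (fun T : ℝ => Real.log T * arcNormIntegral (fun z => Complex.exp (-z)) α T)
      atTop (𝓝 0) := by
  have hlog : Tendsto (fun T : ℝ => Real.log T / T) atTop (𝓝 0) :=
    Real.isLittleO_log_id_atTop.tendsto_div_nhds_zero
  have hbound := hlog.const_mul (Real.exp (-|α.re|))⁻¹
  rw [mul_zero] at hbound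
  refine squeeze_zero' ?_ ?_ hbound
  · filter_upwards [eventually_ge_atTop 1] with T hT
    exact mul_nonneg (Real.log_nonneg hT) arcNormIntegral_nonneg
  · filter_upwards [eventually_ge_atTop 1] with T hT
    have := Real.log_nonneg hT
    calc Real.log T * arcNormIntegral (fun z => Complex.exp (-z)) α T
        ≤ Real.log T * (1 / (Real.exp (-|α.re|) * T)) := by
          gcongr
          exact arcNormIntegral_exp_neg_le hα (zero_lt_one.trans_le hT)
      _ = (Real.exp (-|α.re|))⁻¹ * (Real.log T / T) := by
          rw [one_div, mul_inv]
          ring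

lemma integral_Ioi_exp_neg_mul_log :
    ∫ x in Set.Ioi (0 : ℝ), Complex.exp (-x) * (Real.log x : ℂ) =
      -(Real.eulerMascheroniConstant : ℂ) := by
  have hΓ : Complex.GammaIntegral =ᶠ[𝓝 1] Complex.Gamma := by
    have hre : (0 : ℝ) < (1 : ℂ).re := by simp
    filter_upwards [Complex.continuous_re.continuousAt.eventually_const_lt hre] with s hs
    exact (Complex.Gamma_eq_integral hs).symm
  rw [← (hΓ.hasDerivAt_iff.1 (Complex.hasDerivAt_GammaIntegral (by norm_num))).unique
    Complex.hasDerivAt_Gamma_one]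
  simp [mul_comm]

lemma tendsto_integral_exp_neg_mul_log :
    Tendsto (fun T : ℝ => ∫ x in (0 : ℝ)..T, Complex.exp (-x) * (Real.log x : ℂ)) atTop
      (𝓝 (-(Real.eulerMascheroniConstant : ℂ))) := by
  have hγ : (Real.eulerMascheroniConstant : ℂ) ≠ 0 := by
    exact_mod_cast (one_half_pos.trans Real.one_half_lt_eulerMascheroniConstant).ne'
  -- A non-integrable function would have Bochner integral `0`.
  have hint : IntegrableOn (fun x : ℝ => Complex.exp (-x) * (Real.log x : ℂ)) (Set.Ioi 0) :=
    Integrable.of_integral_ne_zero (by rwa [integral_Ioi_exp_neg_mul_log, neg_ne_zero])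
  rw [← integral_Ioi_exp_neg_mul_log]
  exact intervalIntegral_tendsto_integral_Ioi 0 hint tendsto_id

lemma tendsto_dslopePrimitive_exp_neg_add_log :
    Tendsto (fun T : ℝ => dslopePrimitive (fun z => Complex.exp (-z)) T + Real.log T) atTop
      (𝓝 (-(Real.eulerMascheroniConstant : ℂ))) := by
  have hvanish : Tendsto (fun T : ℝ => ((Real.log T * Real.exp (-T) : ℝ) : ℂ)) atTop (𝓝 0) := by
    have hexp : Tendsto (fun T : ℝ => T * Real.exp (-T)) atTop (𝓝 0) := by
      simpa using Real.tendsto_pow_mul_exp_neg_atTop_nhds_zero 1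
    rw [← Complex.ofReal_zero]
    refine (Complex.continuous_ofReal.tendsto 0).comp ?_
    refine squeeze_zero' ?_ ?_ hexp
    · filter_upwards [eventually_ge_atTop 1] with T hT
      exact mul_nonneg (Real.log_nonneg hT) (Real.exp_nonneg _)
    · filter_upwards [eventually_ge_atTop 0] with T hT
      exact mul_le_mul_of_nonneg_right (Real.log_le_self hT) (Real.exp_nonneg _)
  have hlim := tendsto_integral_exp_neg_mul_log.add hvanish
  rw [add_zero] at hlim
  refine hlim.congr' ?_
  filter_upwards [eventually_ge_atTop 0] with T hT
  have hderiv (z : ℂ) : deriv (fun z => Complex.exp (-z)) z = -Complex.exp (-z) := by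
    simpa using (hasDerivAt_neg z).cexp.deriv
  have hparts := integral_deriv_mul_log (g := fun z => Complex.exp (-z)) (by fun_prop) 1 hT
  simp only [hderiv, one_mul, neg_mul, intervalIntegral.integral_neg, neg_zero,
    Complex.exp_zero] at hparts
  push_cast
  linear_combination -hparts

theorem tendsto_integral_exp_neg_sub_exp_neg_div_mul_log (hp : p ≠ 0) (hp' : 0 ≤ p.re)
    (hq : q ≠ 0) (hq' : 0 ≤ q.re) :
    Tendsto (fun T : ℝ => ∫ x in (0 : ℝ)..T,
        (Complex.exp (-(p * x)) - Complex.exp (-(q * x))) / x * (Real.log x : ℂ))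
      atTop (𝓝 ((Complex.log p ^ 2 - Complex.log q ^ 2) / 2 +
        Real.eulerMascheroniConstant * (Complex.log p - Complex.log q))) := by
  have him {r : ℂ} (hr : 0 ≤ r.re) : |(Complex.log r).im| ≤ Real.pi / 2 := by
    rwa [Complex.log_im, Complex.abs_arg_le_pi_div_two_iff]
  have hlim := tendsto_integral_sub_div_mul_log (f := fun z => Complex.exp (-z)) (by fun_prop)
    (by simpa using tendsto_dslopePrimitive_exp_neg_add_log)
    (tendsto_log_mul_arcNormIntegral_exp_neg (him hp'))
    (tendsto_log_mul_arcNormIntegral_exp_neg (him hq'))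
  simp only [Complex.exp_log hp, Complex.exp_log hq] at hlim
  refine hlim.trans_eq ?_
  rw [neg_zero, Complex.exp_zero]
  congr 1
  ring

end Exponential

section Imaginary

variable {a b : ℝ}

lemma exp_neg_I_mul_exp_I_sub_one_div_mul (t u x : ℝ) (w : ℂ) :
    Complex.exp (-Complex.I * u * x) *
        ((Complex.exp (Complex.I * t * x) - 1) / (Complex.I * x)) * w =
      -Complex.I * ((Complex.exp (Complex.I * (t - u : ℝ) * x) -
        Complex.exp (Complex.I * (-u : ℝ) * x)) / x * w) := by
  have hexp : Complex.exp (Complex.I * (t - u : ℝ) * x) =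
      Complex.exp (-Complex.I * u * x) * Complex.exp (Complex.I * t * x) := by
    rw [← Complex.exp_add]
    push_cast
    ring_nf
  rw [hexp, Complex.ofReal_neg, mul_neg, ← neg_mul, ← div_div, Complex.div_I]
  ring

lemma log_neg_I_mul_ofReal (ha : a ≠ 0) :
    Complex.log (-Complex.I * a) = Real.log |a| - Real.pi / 2 * Real.sign a * Complex.I := by
  rcases lt_or_gt_of_ne ha with hneg | hpos
  · have hrw : -Complex.I * (a : ℂ) = ((-a : ℝ) : ℂ) * Complex.I := by
      push_cast
      ring
    rw [hrw, Complex.log_ofReal_mul (neg_pos.2 hneg) Complex.I_ne_zero, Complex.log_I,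
      abs_of_neg hneg, Real.sign_of_neg hneg]
    push_cast
    ring
  · rw [mul_comm, Complex.log_ofReal_mul hpos (neg_ne_zero.2 Complex.I_ne_zero),
      Complex.log_neg_I, abs_of_pos hpos, Real.sign_of_pos hpos]
    push_cast
    ring

lemma log_neg_I_mul_ofReal_sq (ha : a ≠ 0) :
    Complex.log (-Complex.I * a) ^ 2 =
      Real.log |a| ^ 2 - Real.pi ^ 2 / 4 - Real.pi * Real.sign a * Real.log |a| * Complex.I := by
  have hsign : (Real.sign a : ℂ) ^ 2 = 1 := by
    rcases Real.sign_apply_eq_of_ne_zero a ha with h | h <;> simp [h]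
  rw [log_neg_I_mul_ofReal ha]
  linear_combination (Real.pi ^ 2 / 4 * Real.sign a ^ 2 : ℂ) * Complex.I_sq -
    (Real.pi ^ 2 / 4 : ℂ) * hsign

theorem tendsto_integral_exp_I_sub_exp_I_div_mul_log (ha : a ≠ 0) (hb : b ≠ 0) :
    Tendsto (fun T : ℝ => ∫ x in (0 : ℝ)..T,
        (Complex.exp (Complex.I * a * x) - Complex.exp (Complex.I * b * x)) / x *
          (Real.log x : ℂ))
      atTop (𝓝 ((Complex.log (-Complex.I * a) ^ 2 - Complex.log (-Complex.I * b) ^ 2) / 2 +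
        Real.eulerMascheroniConstant *
          (Complex.log (-Complex.I * a) - Complex.log (-Complex.I * b)))) := by
  have hne {r : ℝ} (hr : r ≠ 0) : -Complex.I * (r : ℂ) ≠ 0 := by simpa
  simpa only [neg_mul, neg_neg] using tendsto_integral_exp_neg_sub_exp_neg_div_mul_log
    (hne ha) (by simp) (hne hb) (by simp)

end Imaginary

/-- For `t ≠ 0`, `u ∉ {0, t}` and `C` the Euler–Mascheroni constant, the improper integral
`lim_{T→∞} ∫_0^T e^{-iux} ((e^{itx} - 1)/(ix)) log x dx` exists and equals
`-i log(|t-u|/|u|) (C + (1/2) log(|t-u| |u|))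
  - (π/2)((C + log|t-u|) sign(t-u) - (C + log|u|) sign(-u))`. -/
theorem stmt4 (t u : ℝ) (ht : t ≠ 0) (hu : u ≠ 0) (hut : u ≠ t) :
    Tendsto
      (fun T : ℝ => ∫ x in (0:ℝ)..T,
        Complex.exp (-(Complex.I) * u * x) *
          ((Complex.exp (Complex.I * t * x) - 1) / (Complex.I * x)) * (Real.log x : ℂ))
      atTop
      (nhds (-(Complex.I) * (Real.log (|t - u| / |u|) : ℂ) *
          ((Real.eulerMascheroniConstant + (1/2) * Real.log (|t - u| * |u|) : ℝ) : ℂ) -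
        ((Real.pi / 2 : ℝ) : ℂ) *
          (((Real.eulerMascheroniConstant + Real.log |t - u|) * Real.sign (t - u) -
            (Real.eulerMascheroniConstant + Real.log |u|) * Real.sign (-u) : ℝ) : ℂ))) := by
  have ha : t - u ≠ 0 := sub_ne_zero.2 hut.symm
  have hb : -u ≠ 0 := neg_ne_zero.2 hu
  simp only [exp_neg_I_mul_exp_I_sub_one_div_mul, intervalIntegral.integral_const_mul]
  refine ((tendsto_integral_exp_I_sub_exp_I_div_mul_log ha hb).const_mul _).trans_eq ?_
  rw [log_neg_I_mul_ofReal_sq ha, log_neg_I_mul_ofReal_sq hb, log_neg_I_mul_ofReal ha,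
    log_neg_I_mul_ofReal hb, abs_neg, Real.log_div (abs_ne_zero.2 ha) (abs_ne_zero.2 hu),
    Real.log_mul (abs_ne_zero.2 ha) (abs_ne_zero.2 hu)]
  congr 1
  push_cast
  linear_combination (Real.pi / 2 *
    ((Real.eulerMascheroniConstant + Real.log |t - u|) * Real.sign (t - u) -
      (Real.eulerMascheroniConstant + Real.log |u|) * Real.sign (-u)) : ℂ) * Complex.I_sq
end

section
/- Let t ∈ ℝ \ {0}, u ∈ ℝ \ {0, t}, and a ∈ ℂ. Then the improper symmetric integral lim_{T→∞} ∫_{−T}^{T} e^{−iux} ((e^{itx} − 1)/(ix)) · (1_{(0,∞)}(x)·a + 1_{(−∞,0)}(x)·\bar{a}) dx exists and equals π·(sign(t−u) − sign(−u))·Re(a) − 2·log(|t−u|/|u|)·Im(a); in particular the limit is real when multiplied out as stated. -/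
open MeasureTheory Filter

/-!
The integrand takes conjugate values at `x` and `-x`, so the symmetric integral is twice the real
part of the integral over `(0, T)`. There the integrand is `-ia (e^{-zx} - e^{-wx})/x` with
`z = i(u - t)` and `w = iu`, and everything reduces to the complex Frullani integral
`∫₀^∞ (e^{-zx} - e^{-wx})/x dx = log w - log z` on the closed right half-plane minus the origin.

The segment joining `z` and `w` may pass through the origin, so each of them is compared with `1`
instead. Writing `(e^{-x} - e^{-zx})/x` as the integral of `e^{-ζx}` in `ζ` along the segment from
`1` to `z` and exchanging the integrals over the compact rectangle gives
`∫₀^T (e^{-x} - e^{-zx})/x dx = ∫_1^z (1 - e^{-ζT})/ζ dζ = log z - ∫_1^z e^{-ζT}/ζ dζ`,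
and the last integral vanishes as `T → ∞` because `re ζ > 0` on the open segment.
-/

open Complex Topology
open scoped ComplexConjugate

section Integrals

lemma intervalIntegral_neg_self_eq_two_mul_re {𝕜 : Type*} [RCLike 𝕜] {f : ℝ → 𝕜} {T : ℝ}
    (hf : ∀ x, f (-x) = conj (f x)) (hint : IntervalIntegrable f volume 0 T) :
    ∫ x in (-T)..T, f x = ((2 * RCLike.re (∫ x in (0 : ℝ)..T, f x) : ℝ) : 𝕜) := by
  have hconj : ∫ x in (-T)..0, f x = conj (∫ x in (0 : ℝ)..T, f x) := by
    rw [← neg_zero, ← intervalIntegral.integral_comp_neg, neg_zero]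
    simp only [hf, intervalIntegral, integral_conj, map_sub]
  have hint' : IntervalIntegrable f volume (-T) 0 := by
    rw [IntervalIntegrable.iff_comp_neg, neg_neg, neg_zero, intervalIntegrable_iff]
    simp only [hf]
    exact (RCLike.conjCLE : 𝕜 ≃L[ℝ] 𝕜).integrable_comp_iff.mpr hint.symm.def'
  rw [← intervalIntegral.integral_add_adjacent_intervals hint' hint, hconj, add_comm,
    RCLike.add_conj]
  push_cast
  rfl

lemma intervalIntegrable_slope {E : Type*} [NormedAddCommGroup E] [NormedSpace ℝ E] {f : ℝ → E}
    {c : ℝ} (hf : Continuous f) (hc : DifferentiableAt ℝ f c) (a b : ℝ) :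
    IntervalIntegrable (slope f c) volume a b := by
  have hcont : Continuous (dslope f c) := by
    rw [← continuousOn_univ, continuousOn_dslope univ_mem]
    exact ⟨hf.continuousOn, hc⟩
  refine (hcont.intervalIntegrable a b).congr_ae (ae_restrict_of_ae ?_)
  filter_upwards [Measure.ae_ne volume c] with x hx using dslope_of_ne f hx

end Integrals

section Frullani

lemma intervalIntegrable_cexp_sub_cexp_div (z w : ℂ) (a b : ℝ) :
    IntervalIntegrable (fun x : ℝ => (cexp (-z * x) - cexp (-w * x)) / x) volume a b := by
  have hdiff : Differentiable ℝ fun x : ℝ => cexp (-z * x) - cexp (-w * x) := by fun_prop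
  refine (intervalIntegrable_slope hdiff.continuous (hdiff 0) a b).congr fun x _ => ?_
  simp [slope_def_module, div_eq_inv_mul]

lemma cexp_sub_cexp_div_eq_integral_segment (z w : ℂ) {x : ℝ} (hx : x ≠ 0) :
    (cexp (-z * x) - cexp (-(z + w) * x)) / x
      = w * ∫ r in (0 : ℝ)..1, cexp (-(z + r • w) * x) := by
  have hx' : (x : ℂ) ≠ 0 := ofReal_ne_zero.mpr hx
  have hderiv (ζ : ℂ) : HasDerivAt (fun ζ => -cexp (-ζ * x) / x) (cexp (-ζ * x)) ζ := by
    convert! ((((hasDerivAt_id ζ).neg.mul_const (x : ℂ)).cexp).neg.div_const (x : ℂ)) using 1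
    simp [hx']
  have hftc := intervalIntegral.integral_unitInterval_deriv_eq_sub (z₀ := z) (z₁ := w)
    (f' := fun ζ => cexp (-ζ * x)) (by fun_prop) (fun r _ => hderiv (z + r • w))
  rw [← smul_eq_mul w, hftc]
  ring

lemma one_add_smul_ne_zero {w : ℂ} (hw : 1 + w ∈ slitPlane) {r : ℝ} (hr : r ∈ Set.Icc (0 : ℝ) 1) :
    1 + r • w ≠ 0 :=
  slitPlane_ne_zero (starConvex_one_slitPlane.add_smul_mem hw hr.1 hr.2)

lemma intervalIntegrable_cexp_mul_inv_segment {w : ℂ} (hw : 1 + w ∈ slitPlane) (T : ℝ) :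
    IntervalIntegrable (fun r : ℝ => cexp (-(1 + r • w) * T) * (1 + r • w)⁻¹) volume 0 1 := by
  refine ContinuousOn.intervalIntegrable_of_Icc zero_le_one ?_
  exact ContinuousOn.mul (by fun_prop) (continuousOn_one_add_mul_inv hw)

lemma integral_cexp_neg_sub_cexp_div_eq {w : ℂ} (hw : 1 + w ∈ slitPlane) (T : ℝ) :
    ∫ x in (0 : ℝ)..T, (cexp (-x) - cexp (-(1 + w) * x)) / x
      = log (1 + w) - w * ∫ r in (0 : ℝ)..1, cexp (-(1 + r • w) * T) * (1 + r • w)⁻¹ := by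
  have hswap : ∫ x in (0 : ℝ)..T, ∫ r in (0 : ℝ)..1, cexp (-(1 + r • w) * x)
      = ∫ r in (0 : ℝ)..1, ∫ x in (0 : ℝ)..T, cexp (-(1 + r • w) * x) := by
    refine intervalIntegral_intervalIntegral_swap ?_
    have hcont : Continuous (Function.uncurry fun x r : ℝ => cexp (-(1 + r • w) * x)) := by
      fun_prop
    exact (hcont.continuousOn.integrableOn_compact
      (isCompact_uIcc.prod isCompact_uIcc)).mono_set
      (Set.prod_mono Set.uIoc_subset_uIcc Set.uIoc_subset_uIcc)
  have hinner : ∀ r ∈ Set.uIcc (0 : ℝ) 1, ∫ x in (0 : ℝ)..T, cexp (-(1 + r • w) * x)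
      = (1 + r • w)⁻¹ - cexp (-(1 + r • w) * T) * (1 + r • w)⁻¹ := by
    intro r hr
    rw [Set.uIcc_of_le zero_le_one] at hr
    rw [integral_exp_mul_complex (neg_ne_zero.mpr (one_add_smul_ne_zero hw hr))]
    simp only [ofReal_zero, mul_zero, Complex.exp_zero, div_eq_mul_inv, inv_neg]
    ring
  calc ∫ x in (0 : ℝ)..T, (cexp (-x) - cexp (-(1 + w) * x)) / x
      = ∫ x in (0 : ℝ)..T, w * ∫ r in (0 : ℝ)..1, cexp (-(1 + r • w) * x) := by
        refine intervalIntegral.integral_congr_uIoo fun x hx => ?_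
        have hx0 : x ≠ 0 := by
          rintro rfl
          simp at hx
        simpa only [neg_one_mul] using cexp_sub_cexp_div_eq_integral_segment 1 w hx0
    _ = w * ∫ r in (0 : ℝ)..1,
          ((1 + r • w)⁻¹ - cexp (-(1 + r • w) * T) * (1 + r • w)⁻¹) := by
        rw [intervalIntegral.integral_const_mul, hswap, intervalIntegral.integral_congr hinner]
    _ = _ := by
        rw [intervalIntegral.integral_sub
          ((continuousOn_one_add_mul_inv hw).intervalIntegrable_of_Icc zero_le_one)
          (intervalIntegrable_cexp_mul_inv_segment hw T), mul_sub, log_eq_integral hw]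

lemma tendsto_integral_cexp_mul_inv_segment {w : ℂ} (hw : 1 + w ∈ slitPlane)
    (hre : 0 ≤ (1 + w).re) :
    Tendsto (fun T : ℝ => ∫ r in (0 : ℝ)..1, cexp (-(1 + r • w) * T) * (1 + r • w)⁻¹)
      atTop (𝓝 0) := by
  have hnorm (r T : ℝ) : ‖cexp (-(1 + r • w) * T) * (1 + r • w)⁻¹‖
      = Real.exp (-(1 + r * w.re) * T) * ‖(1 + r • w)⁻¹‖ := by
    simp [Complex.norm_exp]
  have hpos {r : ℝ} (h0 : 0 < r) (h1 : r < 1) : 0 < 1 + r * w.re := by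
    simp only [add_re, one_re] at hre
    nlinarith
  rw [← intervalIntegral.integral_zero (E := ℂ) (μ := volume) (a := 0) (b := 1)]
  refine intervalIntegral.tendsto_integral_filter_of_dominated_convergence
    (fun r => ‖(1 + r • w)⁻¹‖) ?_ ?_ ?_ ?_
  · exact .of_forall fun T =>
      (intervalIntegrable_cexp_mul_inv_segment hw T).def'.aestronglyMeasurable
  · filter_upwards [eventually_ge_atTop 0] with T hT
    filter_upwards [Measure.ae_ne volume 1] with r hr1 hr
    rw [Set.uIoc_of_le zero_le_one] at hr
    rw [hnorm]
    refine mul_le_of_le_one_left (norm_nonneg _) (Real.exp_le_one_iff.mpr ?_)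
    nlinarith [hpos hr.1 (hr.2.lt_of_ne hr1)]
  · exact ((continuousOn_one_add_mul_inv hw).intervalIntegrable_of_Icc zero_le_one).norm
  · filter_upwards [Measure.ae_ne volume 1] with r hr1 hr
    rw [Set.uIoc_of_le zero_le_one] at hr
    have hexp : Tendsto (fun T : ℝ => Real.exp (-(1 + r * w.re) * T)) atTop (𝓝 0) :=
      Real.tendsto_exp_atBot.comp (tendsto_id.const_mul_atTop_of_neg
        (neg_lt_zero.mpr (hpos hr.1 (hr.2.lt_of_ne hr1))))
    rw [tendsto_zero_iff_norm_tendsto_zero]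
    simpa only [hnorm, zero_mul] using hexp.mul_const ‖(1 + r • w)⁻¹‖

lemma mem_slitPlane_of_re_nonneg {z : ℂ} (hre : 0 ≤ z.re) (hz : z ≠ 0) : z ∈ slitPlane := by
  rw [mem_slitPlane_iff_not_le_zero, nonpos_iff]
  rintro ⟨hre', him⟩
  exact hz (Complex.ext (le_antisymm hre' hre) him)

lemma tendsto_integral_cexp_neg_sub_cexp_div {z : ℂ} (hre : 0 ≤ z.re) (hz : z ≠ 0) :
    Tendsto (fun T : ℝ => ∫ x in (0 : ℝ)..T, (cexp (-x) - cexp (-z * x)) / x)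
      atTop (𝓝 (log z)) := by
  obtain ⟨w, rfl⟩ : ∃ w, z = 1 + w := ⟨z - 1, by ring⟩
  have hw := mem_slitPlane_of_re_nonneg hre hz
  simp only [integral_cexp_neg_sub_cexp_div_eq hw]
  simpa using ((tendsto_integral_cexp_mul_inv_segment hw hre).const_mul w).const_sub (log (1 + w))

theorem tendsto_integral_cexp_sub_cexp_div {z w : ℂ} (hz_re : 0 ≤ z.re) (hz : z ≠ 0)
    (hw_re : 0 ≤ w.re) (hw : w ≠ 0) :
    Tendsto (fun T : ℝ => ∫ x in (0 : ℝ)..T, (cexp (-z * x) - cexp (-w * x)) / x)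
      atTop (𝓝 (log w - log z)) := by
  refine ((tendsto_integral_cexp_neg_sub_cexp_div hw_re hw).sub
    (tendsto_integral_cexp_neg_sub_cexp_div hz_re hz)).congr fun T => ?_
  have hint (ζ : ℂ) :
      IntervalIntegrable (fun x : ℝ => (cexp (-x) - cexp (-ζ * x)) / x) volume 0 T := by
    simpa only [neg_one_mul] using intervalIntegrable_cexp_sub_cexp_div 1 ζ 0 T
  rw [← intervalIntegral.integral_sub (hint w) (hint z)]
  congr! 2 with x
  ring

end Frullani

lemma log_ofReal_mul_I (p : ℝ) :
    log (p * I) = (Real.log |p| : ℝ) + (Real.pi / 2 * Real.sign p : ℝ) * I := by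
  apply Complex.ext
  · simp [log_re]
  · rcases lt_trichotomy p 0 with hp | rfl | hp
    · have harg : (p : ℂ) * I = ((-p : ℝ) : ℂ) * -I := by push_cast; ring
      rw [log_im, harg, arg_real_mul _ (neg_pos.mpr hp), arg_neg_I, Real.sign_of_neg hp]
      simp
    · simp
    · rw [log_im, arg_real_mul _ hp, arg_I, Real.sign_of_pos hp]
      simp

section Integrand

/-- The integrand `e^{-iux} ((e^{itx} - 1)/(ix)) (1_{(0,∞)}(x) a + 1_{(-∞,0)}(x) conj a)`, named so
that its symmetry and its form on the positive half-line can be stated separately. -/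
noncomputable def hermitianIntegrand (t u : ℝ) (a : ℂ) (x : ℝ) : ℂ :=
  cexp (-I * u * x) * ((cexp (I * t * x) - 1) / (I * x)) *
    (Set.indicator (Set.Ioi (0 : ℝ)) (fun _ => a) x +
      Set.indicator (Set.Iio (0 : ℝ)) (fun _ => conj a) x)

variable (t u : ℝ) (a : ℂ)

lemma hermitianIntegrand_neg (x : ℝ) :
    hermitianIntegrand t u a (-x) = conj (hermitianIntegrand t u a x) := by
  have hindicator : conj (Set.indicator (Set.Ioi (0 : ℝ)) (fun _ => a) x +
        Set.indicator (Set.Iio (0 : ℝ)) (fun _ => conj a) x)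
      = Set.indicator (Set.Ioi (0 : ℝ)) (fun _ => a) (-x) +
        Set.indicator (Set.Iio (0 : ℝ)) (fun _ => conj a) (-x) := by
    rcases lt_trichotomy x 0 with hx | rfl | hx
    · simp [hx, hx.le]
    · simp
    · simp [hx, hx.le]
  simp only [hermitianIntegrand, map_mul, hindicator]
  simp [← exp_conj]

lemma hermitianIntegrand_of_pos {x : ℝ} (hx : 0 < x) :
    hermitianIntegrand t u a x
      = -I * a * ((cexp (-((u - t : ℝ) * I) * x) - cexp (-(u * I) * x)) / x) := by
  have hexp : cexp (-(u * I) * x) = cexp (-I * u * x) := by ring_nf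
  have hexp_sub : cexp (-((u - t : ℝ) * I) * x) = cexp (-I * u * x) * cexp (I * t * x) := by
    rw [← Complex.exp_add]
    congr 1
    push_cast
    ring
  have hindicator : Set.indicator (Set.Ioi (0 : ℝ)) (fun _ => a) x +
      Set.indicator (Set.Iio (0 : ℝ)) (fun _ => conj a) x = a := by
    simp [hx, hx.le]
  rw [hermitianIntegrand, hindicator, hexp_sub, hexp, div_eq_mul_inv, mul_inv, inv_I]
  ring

variable {T : ℝ}

lemma intervalIntegrable_hermitianIntegrand (hT : 0 ≤ T) :
    IntervalIntegrable (hermitianIntegrand t u a) volume 0 T := by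
  refine ((intervalIntegrable_cexp_sub_cexp_div ((u - t : ℝ) * I) (u * I) 0 T).const_mul
    (-I * a)).congr fun x hx => ?_
  rw [Set.uIoc_of_le hT] at hx
  exact (hermitianIntegrand_of_pos t u a hx.1).symm

lemma integral_hermitianIntegrand (hT : 0 ≤ T) :
    ∫ x in (-T)..T, hermitianIntegrand t u a x
      = ((2 * (-I * a * ∫ x in (0 : ℝ)..T,
          (cexp (-((u - t : ℝ) * I) * x) - cexp (-(u * I) * x)) / x).re : ℝ) : ℂ) := by
  rw [intervalIntegral_neg_self_eq_two_mul_re (hermitianIntegrand_neg t u a)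
    (intervalIntegrable_hermitianIntegrand t u a hT), ← intervalIntegral.integral_const_mul,
    intervalIntegral.integral_congr_Ioo_of_le hT
      fun x hx => hermitianIntegrand_of_pos t u a hx.1]
  rfl

end Integrand

/-- For `t ≠ 0`, `u ∉ {0, t}` and `a ∈ ℂ`, the improper symmetric integral
`lim_{T→∞} ∫_{-T}^{T} e^{-iux} ((e^{itx} - 1)/(ix)) (1_{(0,∞)}(x) a + 1_{(-∞,0)}(x) conj a) dx`
exists and equals the real number
`π (sign(t-u) - sign(-u)) Re(a) - 2 log(|t-u|/|u|) Im(a)`. -/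
theorem stmt5 (t u : ℝ) (ht : t ≠ 0) (hu : u ≠ 0) (hut : u ≠ t) (a : ℂ) :
    Tendsto
      (fun T : ℝ => ∫ x in (-T)..T,
        Complex.exp (-(Complex.I) * u * x) *
          ((Complex.exp (Complex.I * t * x) - 1) / (Complex.I * x)) *
          (Set.indicator (Set.Ioi (0:ℝ)) (fun _ => a) x +
            Set.indicator (Set.Iio (0:ℝ)) (fun _ => (starRingEnd ℂ) a) x))
      atTop
      (nhds ((Real.pi * (Real.sign (t - u) - Real.sign (-u)) * a.re -
        2 * Real.log (|t - u| / |u|) * a.im : ℝ) : ℂ)) := by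
  have hut' : u - t ≠ 0 := sub_ne_zero.mpr hut
  have hfrullani := tendsto_integral_cexp_sub_cexp_div (z := (u - t : ℝ) * I) (w := u * I)
    (by simp) (mul_ne_zero (ofReal_ne_zero.mpr hut') I_ne_zero)
    (by simp) (mul_ne_zero (ofReal_ne_zero.mpr hu) I_ne_zero)
  have hlim := (continuous_ofReal.tendsto _).comp
    (((continuous_re.tendsto _).comp (hfrullani.const_mul (-I * a))).const_mul 2)
  have hvalue : 2 * (-I * a * (log (u * I) - log ((u - t : ℝ) * I))).re
      = Real.pi * (Real.sign (t - u) - Real.sign (-u)) * a.re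
        - 2 * Real.log (|t - u| / |u|) * a.im := by
    rw [log_ofReal_mul_I, log_ofReal_mul_I, abs_sub_comm t u, ← neg_sub u t, Real.sign_neg,
      Real.sign_neg, Real.log_div (abs_ne_zero.mpr hut') (abs_ne_zero.mpr hu)]
    simp only [mul_re, mul_im, sub_re, sub_im, add_re, add_im, neg_re, neg_im, I_re, I_im,
      ofReal_re, ofReal_im]
    ring
  rw [hvalue] at hlim
  refine hlim.congr' ?_
  filter_upwards [eventually_ge_atTop 0] with T hT
  exact (integral_hermitianIntegrand t u a hT).symm
end

section
/- For every t ∈ ℝ, the function u ↦ (log(|t−u|/|u|))² is Lebesgue integrable on ℝ and ∫_ℝ (log(|t−u|/|u|))² du = π²·|t|. -/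
open MeasureTheory

/-!
For `t ≠ 0`, substituting `u = t / (1 + v)` turns `(t - u) / u` into `v`, with Jacobian
`|t| / (1 + v) ^ 2`. Putting `v = exp x` and `v = -exp x` on the two half-lines and adding the
weights, `u ↦ log (|t - u| / |u|)` pushes Lebesgue measure forward to the measure with the even
density `|t| * cosh x / sinh x ^ 2`. For `x > 0` this density is
`|t| * ∑ₖ 2 (2k + 1) exp (-(2k + 1) x)`, so its second moment is
`2 |t| ∑ₖ 4 / (2k + 1) ^ 2 = π ^ 2 * |t|`. All terms are nonnegative, so the computation takes place
in `ℝ≥0∞`, where a finite value also gives integrability.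
-/

section

open Real Set
open scoped ENNReal

lemma lintegral_eq_lintegral_Ioi_zero_add_neg (f : ℝ → ℝ≥0∞) :
    ∫⁻ x, f x = (∫⁻ x in Ioi 0, f x) + ∫⁻ x in Ioi 0, f (-x) := by
  have h_neg : ∫⁻ x in Iic 0, f x = ∫⁻ x in Ioi 0, f (-x) := by
    rw [← (Measure.measurePreserving_neg volume).setLIntegral_comp_preimage_emb
      (MeasurableEquiv.neg ℝ).measurableEmbedding, neg_preimage, neg_Iic, neg_zero,
      setLIntegral_congr Ioi_ae_eq_Ici]
  rw [← h_neg, ← compl_Ioi, lintegral_add_compl f measurableSet_Ioi]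

lemma lintegral_Ioi_zero_eq_lintegral_exp (f : ℝ → ℝ≥0∞) :
    ∫⁻ y in Ioi 0, f y = ∫⁻ x, ENNReal.ofReal (exp x) * f (exp x) := by
  rw [← range_exp, ← image_univ, lintegral_image_eq_lintegral_abs_deriv_mul MeasurableSet.univ
    (fun x _ ↦ (hasDerivAt_exp x).hasDerivWithinAt) exp_injective.injOn, setLIntegral_univ]
  simp only [abs_exp]

lemma image_div_one_add_compl_singleton_neg_one {t : ℝ} (ht : t ≠ 0) :
    (fun v ↦ t / (1 + v)) '' {-1}ᶜ = {0}ᶜ := by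
  ext u
  simp only [mem_image, mem_compl_singleton_iff]
  constructor
  · rintro ⟨v, hv, rfl⟩
    exact div_ne_zero ht (by grind)
  · intro hu
    exact ⟨t / u - 1, by grind, by simp [ht]⟩

lemma lintegral_comp_sub_div_self {t : ℝ} (ht : t ≠ 0) (f : ℝ → ℝ≥0∞) :
    ∫⁻ u, f ((t - u) / u) =
      ENNReal.ofReal |t| * ∫⁻ v, ENNReal.ofReal ((1 + v) ^ 2)⁻¹ * f v := by
  have h_deriv : ∀ v ∈ ({-1}ᶜ : Set ℝ),
      HasDerivWithinAt (fun v ↦ t / (1 + v)) (-(t / (1 + v) ^ 2)) {-1}ᶜ v := fun v hv ↦ by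
    have h_ne : 1 + v ≠ 0 := by grind
    convert! (((hasDerivAt_id' v).const_add 1).fun_inv h_ne).const_mul t |>.hasDerivWithinAt using 1
    ring
  have h_inj : InjOn (fun v ↦ t / (1 + v)) {-1}ᶜ := fun v _ w _ h ↦ by
    simpa [div_eq_mul_inv, ht] using h
  have h_comp : ∀ v ∈ ({-1}ᶜ : Set ℝ), (t - t / (1 + v)) / (t / (1 + v)) = v := fun v hv ↦ by
    have : 1 + v ≠ 0 := by grind
    field_simp
    ring
  have h_meas : MeasurableSet ({-1}ᶜ : Set ℝ) := (measurableSet_singleton _).compl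
  calc ∫⁻ u, f ((t - u) / u)
    _ = ∫⁻ u in {0}ᶜ, f ((t - u) / u) := by rw [restrict_compl_singleton]
    _ = ∫⁻ v in {-1}ᶜ, ENNReal.ofReal |(-(t / (1 + v) ^ 2))| *
          f ((t - t / (1 + v)) / (t / (1 + v))) := by
      rw [← image_div_one_add_compl_singleton_neg_one ht,
        lintegral_image_eq_lintegral_abs_deriv_mul h_meas h_deriv h_inj]
    _ = ∫⁻ v in {-1}ᶜ, ENNReal.ofReal |t| * (ENNReal.ofReal ((1 + v) ^ 2)⁻¹ * f v) := by
      refine setLIntegral_congr_fun h_meas fun v hv ↦ ?_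
      simp only [h_comp v hv, abs_neg, abs_div, abs_sq]
      rw [div_eq_mul_inv, ENNReal.ofReal_mul (abs_nonneg t), mul_assoc]
    _ = ENNReal.ofReal |t| * ∫⁻ v, ENNReal.ofReal ((1 + v) ^ 2)⁻¹ * f v := by
      rw [restrict_compl_singleton, lintegral_const_mul' _ _ ENNReal.ofReal_ne_top]

lemma exp_mul_inv_add_exp_mul_inv_eq_cosh_div_sinh_sq {x : ℝ} (hx : x ≠ 0) :
    exp x * ((1 + exp x) ^ 2)⁻¹ + exp x * ((1 - exp x) ^ 2)⁻¹ = cosh x / sinh x ^ 2 := by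
  have h_add : 1 + exp x ≠ 0 := by positivity
  have h_sub : 1 - exp x ≠ 0 := sub_ne_zero.mpr (Ne.symm (by simpa using hx))
  have h_sq : exp x ^ 2 - 1 ≠ 0 := by
    rw [show exp x ^ 2 - 1 = -((1 + exp x) * (1 - exp x)) by ring]
    exact neg_ne_zero.mpr (mul_ne_zero h_add h_sub)
  rw [cosh_eq, sinh_eq, exp_neg]
  field_simp
  ring

lemma lintegral_comp_log_abs_sub_div_abs {t : ℝ} (ht : t ≠ 0) {f : ℝ → ℝ≥0∞} (hf : Measurable f) :
    ∫⁻ u, f (log (|t - u| / |u|)) =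
      ENNReal.ofReal |t| * ∫⁻ x, ENNReal.ofReal (cosh x / sinh x ^ 2) * f x := by
  simp only [← abs_div, log_abs]
  rw [lintegral_comp_sub_div_self ht (fun v ↦ f (log v)), lintegral_eq_lintegral_Ioi_zero_add_neg,
    lintegral_Ioi_zero_eq_lintegral_exp, lintegral_Ioi_zero_eq_lintegral_exp,
    ← lintegral_add_left (by fun_prop)]
  congr 1
  refine lintegral_congr_ae ?_
  filter_upwards [Measure.ae_ne volume (0 : ℝ)] with x hx
  simp only [log_neg_eq_log, log_exp]
  rw [← exp_mul_inv_add_exp_mul_inv_eq_cosh_div_sinh_sq hx, ENNReal.ofReal_add (by positivity)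
    (by positivity), ENNReal.ofReal_mul (exp_nonneg x), ENNReal.ofReal_mul (exp_nonneg x)]
  ring_nf

lemma hasSum_odd_mul_geometric_of_norm_lt_one {𝕜 : Type*} [NormedField 𝕜] {r : 𝕜}
    (hr : ‖r‖ < 1) : HasSum (fun k : ℕ ↦ (2 * k + 1) * r ^ k) ((1 + r) / (1 - r) ^ 2) := by
  have h_ne : 1 - r ≠ 0 := fun h ↦ by simp [← sub_eq_zero.mp h] at hr
  convert! ((hasSum_coe_mul_geometric_of_norm_lt_one hr).mul_left 2).add
    (hasSum_geometric_of_norm_lt_one hr) using 1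
  · ext k
    ring
  · field_simp
    ring

lemma hasSum_odd_mul_exp_neg_odd_mul {x : ℝ} (hx : 0 < x) :
    HasSum (fun k : ℕ ↦ 2 * (2 * k + 1) * exp (-((2 * k + 1) * x))) (cosh x / sinh x ^ 2) := by
  have h_lt : exp (-x) ^ 2 < 1 := pow_lt_one₀ (by positivity) (by simpa using hx) two_ne_zero
  have h_norm : ‖exp (-x) ^ 2‖ < 1 := by simpa using h_lt
  convert! (hasSum_odd_mul_geometric_of_norm_lt_one h_norm).mul_left (2 * exp (-x)) using 1
  · ext k
    have h_exp : exp (-((2 * k + 1) * x)) = exp (-x) * (exp (-x) ^ 2) ^ k := by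
      rw [← pow_mul, ← pow_succ', ← exp_nat_mul]
      push_cast
      ring_nf
    rw [h_exp]
    ring
  · have h_ne : 1 - exp (-x) ^ 2 ≠ 0 := by linarith
    rw [cosh_eq, sinh_eq, ← neg_neg x, exp_neg (-x), neg_neg]
    field_simp

lemma lintegral_rpow_mul_exp_neg_mul_Ioi {a r : ℝ} (ha : 0 < a) (hr : 0 < r) :
    ∫⁻ x in Ioi 0, ENNReal.ofReal (x ^ (a - 1) * exp (-(r * x))) =
      ENNReal.ofReal ((1 / r) ^ a * Gamma a) := by
  have h_int : IntegrableOn (fun x ↦ x ^ (a - 1) * exp (-(r * x))) (Ioi 0) := by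
    simpa using integrableOn_rpow_mul_exp_neg_mul_rpow (s := a - 1) (by linarith) one_pos hr
  rw [← integral_rpow_mul_exp_neg_mul_Ioi ha hr, ofReal_integral_eq_lintegral_ofReal h_int]
  filter_upwards [ae_restrict_mem measurableSet_Ioi] with x hx
  exact mul_nonneg (rpow_nonneg (le_of_lt hx) _) (exp_nonneg _)

lemma lintegral_rpow_mul_cosh_div_sinh_sq_Ioi {s : ℝ} (hs : -1 < s) :
    ∫⁻ x in Ioi 0, ENNReal.ofReal (x ^ s * (cosh x / sinh x ^ 2)) =
      ∑' k : ℕ, ENNReal.ofReal (2 * Gamma (s + 1) / (2 * k + 1) ^ s) := by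
  calc ∫⁻ x in Ioi 0, ENNReal.ofReal (x ^ s * (cosh x / sinh x ^ 2))
    _ = ∫⁻ x in Ioi 0, ∑' k : ℕ, ENNReal.ofReal (2 * (2 * k + 1)) *
          ENNReal.ofReal (x ^ s * exp (-((2 * k + 1) * x))) := by
      refine setLIntegral_congr_fun measurableSet_Ioi fun x (hx : 0 < x) ↦ ?_
      have h_sum := (hasSum_odd_mul_exp_neg_odd_mul hx).mul_left (x ^ s)
      rw [← h_sum.tsum_eq, ENNReal.ofReal_tsum_of_nonneg (fun k ↦ by positivity) h_sum.summable]
      refine tsum_congr fun k ↦ ?_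
      rw [← ENNReal.ofReal_mul (by positivity)]
      ring_nf
    _ = ∑' k : ℕ, ENNReal.ofReal (2 * (2 * k + 1)) *
          ENNReal.ofReal ((1 / (2 * k + 1)) ^ (s + 1) * Gamma (s + 1)) := by
      rw [lintegral_tsum fun k ↦ by fun_prop]
      refine tsum_congr fun k ↦ ?_
      rw [lintegral_const_mul' _ _ ENNReal.ofReal_ne_top,
        ← lintegral_rpow_mul_exp_neg_mul_Ioi (by linarith) (by positivity), add_sub_cancel_right]
    _ = ∑' k : ℕ, ENNReal.ofReal (2 * Gamma (s + 1) / (2 * k + 1) ^ s) := by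
      refine tsum_congr fun k ↦ ?_
      have h_pos : (0 : ℝ) < 2 * k + 1 := by positivity
      rw [← ENNReal.ofReal_mul (by positivity), one_div, inv_rpow h_pos.le,
        rpow_add_one h_pos.ne']
      field_simp

lemma hasSum_one_div_odd_sq :
    HasSum (fun k : ℕ ↦ 1 / (2 * k + 1 : ℝ) ^ 2) (π ^ 2 / 8) := by
  let f : ℕ → ℝ := fun n ↦ 1 / (n : ℝ) ^ 2
  have h_even : HasSum (fun k ↦ f (2 * k)) (π ^ 2 / 6 / 4) := by
    refine (hasSum_zeta_two.div_const 4).congr_fun fun k ↦ ?_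
    simp only [f, Nat.cast_mul, Nat.cast_ofNat]
    ring
  have h_odd : Summable fun k ↦ f (2 * k + 1) :=
    hasSum_zeta_two.summable.comp_injective (i := fun k ↦ 2 * k + 1) fun a b h ↦ by simpa using h
  have h_split : π ^ 2 / 6 / 4 + ∑' k, f (2 * k + 1) = π ^ 2 / 6 :=
    (h_even.even_add_odd h_odd.hasSum).unique hasSum_zeta_two
  have h_tsum : ∑' k, f (2 * k + 1) = π ^ 2 / 8 := by linarith
  simpa [f] using h_odd.hasSum_iff.mpr h_tsum

lemma lintegral_sq_mul_cosh_div_sinh_sq :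
    ∫⁻ x, ENNReal.ofReal (cosh x / sinh x ^ 2) * ENNReal.ofReal (x ^ 2) =
      ENNReal.ofReal (π ^ 2) := by
  have h_half : ∫⁻ x in Ioi 0, ENNReal.ofReal (x ^ 2 * (cosh x / sinh x ^ 2)) =
      ENNReal.ofReal (π ^ 2 / 2) := by
    have h_Gamma : Gamma (2 + 1) = 2 := by simpa using Gamma_nat_eq_factorial 2
    have h_sum := hasSum_one_div_odd_sq.mul_left 4
    have h := lintegral_rpow_mul_cosh_div_sinh_sq_Ioi (s := 2) (by norm_num)
    simp only [rpow_two, h_Gamma] at h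
    rw [h, show π ^ 2 / 2 = 4 * (π ^ 2 / 8) by ring, ← h_sum.tsum_eq,
      ENNReal.ofReal_tsum_of_nonneg (fun k ↦ by positivity) h_sum.summable]
    ring_nf
  simp only [← ENNReal.ofReal_mul' (sq_nonneg _), mul_comm (cosh _ / _)]
  rw [lintegral_eq_lintegral_Ioi_zero_add_neg]
  simp only [neg_sq, cosh_neg, sinh_neg]
  rw [h_half, ← ENNReal.ofReal_add (by positivity) (by positivity), add_halves]

lemma lintegral_log_abs_sub_div_abs_sq (t : ℝ) :
    ∫⁻ u, ENNReal.ofReal (log (|t - u| / |u|) ^ 2) = ENNReal.ofReal (π ^ 2 * |t|) := by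
  obtain rfl | ht := eq_or_ne t 0
  · simp
  · rw [lintegral_comp_log_abs_sub_div_abs ht (f := fun x ↦ ENNReal.ofReal (x ^ 2)) (by fun_prop),
      lintegral_sq_mul_cosh_div_sinh_sq, mul_comm, ENNReal.ofReal_mul (by positivity)]

end

/-- For every `t ∈ ℝ`, the function `u ↦ (log(|t-u|/|u|))²` is Lebesgue integrable on `ℝ`
and `∫ (log(|t-u|/|u|))² du = π² |t|`. -/
theorem stmt19 (t : ℝ) :
    Integrable (fun u : ℝ => Real.log (|t - u| / |u|) ^ 2) ∧
    (∫ u : ℝ, Real.log (|t - u| / |u|) ^ 2) = Real.pi ^ 2 * |t| := by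
  have h_meas : AEStronglyMeasurable fun u : ℝ ↦ Real.log (|t - u| / |u|) ^ 2 :=
    (by fun_prop : Measurable _).aestronglyMeasurable
  have h_nonneg : 0 ≤ᵐ[volume] fun u : ℝ ↦ Real.log (|t - u| / |u|) ^ 2 :=
    .of_forall fun u ↦ sq_nonneg _
  have h_lintegral := lintegral_log_abs_sub_div_abs_sq t
  constructor
  · rw [← lintegral_ofReal_ne_top_iff_integrable h_meas h_nonneg, h_lintegral]
    exact ENNReal.ofReal_ne_top
  · rw [integral_eq_lintegral_of_nonneg_ae h_nonneg h_meas, h_lintegral,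
      ENNReal.toReal_ofReal (by positivity)]
end
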